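/- Fix an integer N ≥ 2, t ∈ [0,1], n ≥ 1, integers a_1, …, a_n all ≥ N, and an integer i ≥ N. Let s^t_{N,n} be defined recursively by s^t_{N,0} = t and s^t_{N,k} = 1 − N/(a_k + s^t_{N,k−1}). Then ρ^t_N(I(a_1,…,a_n,i)) = P_{N,i}(s^t_{N,n}) · ρ^t_N(I(a_1,…,a_n)), where P_{N,i}(x) = (x+N−1)/((x+i)(x+i−1)). -/

import Mathlib

open MeasureTheory Set Real Filter

/-- The Rényi-type continued fraction map `R_N`. -/
noncomputable def RN (N : ℕ) (x : ℝ) : ℝ :=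
  if x = 1 then 0 else (N : ℝ) / (1 - x) - ⌊(N : ℝ) / (1 - x)⌋

/-- `digit N k x` is the `(k+1)`-st digit `a_{k+1}(x)`. -/
noncomputable def digit (N k : ℕ) (x : ℝ) : ℤ :=
  ⌊(N : ℝ) / (1 - (RN N)^[k] x)⌋

/-- The cylinder `I(a_1, …, a_n)`. -/
def cyl (N n : ℕ) (a : ℕ → ℤ) : Set ℝ :=
  {x | x ∈ Set.Icc (0 : ℝ) 1 ∧ Irrational x ∧ ∀ k < n, digit N k x = a k}

/-- The conditional probability measure `ρ^t_N`, with density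
`N(N-1+t)/[N-(1-x)(1-t)]²` on `[0,1]`. -/
noncomputable def rhoT (N : ℕ) (t : ℝ) : Measure ℝ :=
  (volume.restrict (Set.Icc (0 : ℝ) 1)).withDensity fun x =>
    ENNReal.ofReal ((N : ℝ) * ((N : ℝ) - 1 + t) / ((N : ℝ) - (1 - x) * (1 - t)) ^ 2)

/-- `s^t_{N,k}` built from a prescribed digit sequence `a`. -/
noncomputable def sRec (N : ℕ) (t : ℝ) (a : ℕ → ℤ) : ℕ → ℝ
  | 0 => t
  | k + 1 => 1 - (N : ℝ) / ((a k : ℝ) + sRec N t a k)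


lemma aux_den (N : ℕ) (hN : 2 ≤ N) (t x : ℝ) (ht : t ∈ Set.Icc (0 : ℝ) 1)
    (hx : x ∈ Set.Icc (0 : ℝ) 1) : 0 < (N : ℝ) - (1 - x) * (1 - t) := by
  have h2 : (2 : ℝ) ≤ N := by exact_mod_cast hN
  obtain ⟨h3, h4⟩ := ht
  obtain ⟨h5, h6⟩ := hx
  nlinarith [mul_nonneg h5 (sub_nonneg.2 h4)]

lemma aux_meas_RN (N : ℕ) : Measurable (RN N) := by
  unfold RN
  refine Measurable.ite (measurableSet_singleton 1) measurable_const ?_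
  refine Measurable.sub (by fun_prop) ?_
  exact (measurable_from_top (f := fun z : ℤ => (z : ℝ))).comp
    (Int.measurable_floor.comp (by fun_prop))

lemma aux_meas_cyl (N n : ℕ) (a : ℕ → ℤ) : MeasurableSet (cyl N n a) := by
  have hd : ∀ k, Measurable (digit N k) := by
    intro k
    unfold digit
    have := (aux_meas_RN N).iterate k
    exact Int.measurable_floor.comp (by fun_prop)
  have hirr : MeasurableSet {x : ℝ | Irrational x} := by
    have : {x : ℝ | Irrational x} = (Set.range ((↑) : ℚ → ℝ))ᶜ := rfl
    rw [this]
    exact (Set.countable_range _).measurableSet.compl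
  have : cyl N n a = Set.Icc 0 1 ∩ ({x : ℝ | Irrational x} ∩
      ⋂ k, ⋂ (_ : k < n), (digit N k) ⁻¹' {a k}) := by
    ext x; simp [cyl]
  rw [this]
  refine measurableSet_Icc.inter (hirr.inter ?_)
  exact MeasurableSet.iInter fun k => MeasurableSet.iInter fun _ =>
    hd k (measurableSet_singleton _)

lemma aux_irr (N : ℕ) (hN : 2 ≤ N) (b : ℤ) (x y : ℝ) (hx : x ≠ 1)
    (h : (N : ℝ) / (1 - x) = b + y) : Irrational x ↔ Irrational y := by
  have h2 : (N : ℝ) ≠ 0 := by positivity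
  have h1 : 1 - x ≠ 0 := sub_ne_zero.2 hx.symm
  have hb : (b : ℝ) + y ≠ 0 := by rw [← h]; positivity
  constructor
  · rintro hi ⟨q, rfl⟩
    apply hi
    refine ⟨1 - N / (b + q), ?_⟩
    push_cast
    rw [← h]
    field_simp
    ring
  · rintro hi ⟨q, rfl⟩
    apply hi
    refine ⟨N / (1 - q) - b, ?_⟩
    push_cast
    rw [h]; ring

lemma aux_image (N : ℕ) (hN : 2 ≤ N) (n : ℕ) (a : ℕ → ℤ) (ha : (N : ℤ) ≤ a 0) :
    cyl N (n + 1) a =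
      (fun y : ℝ => 1 - (N : ℝ) / ((a 0 : ℝ) + y)) '' cyl N n (fun k => a (k + 1)) := by
  have h2 : (2 : ℝ) ≤ N := by exact_mod_cast hN
  have haR : (N : ℝ) ≤ a 0 := by exact_mod_cast ha
  have hRN : ∀ x y : ℝ, x ≠ 1 → ⌊(N : ℝ) / (1 - x)⌋ = a 0 → (N : ℝ) / (1 - x) = a 0 + y →
      RN N x = y := by
    intro x y hx hf h
    rw [RN, if_neg hx, hf, h]; ring
  ext x
  constructor
  · rintro ⟨⟨hx0, hx1⟩, hirr, hd⟩
    have hx : x ≠ 1 := hirr.ne_one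
    have hx1' : 0 < 1 - x := sub_pos.2 (lt_of_le_of_ne hx1 hx)
    have hf : ⌊(N : ℝ) / (1 - x)⌋ = a 0 := by simpa [digit] using hd 0 (by omega)
    set y := (N : ℝ) / (1 - x) - a 0 with hy
    have h : (N : ℝ) / (1 - x) = a 0 + y := by rw [hy]; ring
    have hR := hRN x y hx hf h
    have hfl := Int.floor_eq_iff.1 hf
    refine ⟨y, ⟨⟨by linarith [hfl.1], by linarith [hfl.2]⟩,
      (aux_irr N hN (a 0) x y hx h).1 hirr, ?_⟩, ?_⟩
    · intro k hk
      have := hd (k + 1) (by omega)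
      rw [digit, Function.iterate_succ_apply, hR] at this
      exact this
    · show 1 - (N : ℝ) / (a 0 + y) = x
      rw [← h]
      field_simp
      ring
  · rintro ⟨y, ⟨⟨hy0, hy1⟩, hirr, hd⟩, rfl⟩
    have hy1' : y < 1 := lt_of_le_of_ne hy1 hirr.ne_one
    have hpos : 0 < (a 0 : ℝ) + y := by linarith
    set x := 1 - (N : ℝ) / ((a 0 : ℝ) + y) with hxdef
    have hq : 0 < (N : ℝ) / (a 0 + y) := by positivity
    have hq1 : (N : ℝ) / (a 0 + y) ≤ 1 := by rw [div_le_one hpos]; linarith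
    have hx : x ≠ 1 := by rw [hxdef]; linarith
    have h : (N : ℝ) / (1 - x) = a 0 + y := by
      have n7 : (N : ℝ) ≠ 0 := by linarith
      rw [hxdef, sub_sub_cancel, div_div_cancel₀ n7]
    have hf : ⌊(N : ℝ) / (1 - x)⌋ = a 0 := by
      rw [Int.floor_eq_iff, h]; constructor <;> linarith
    have hR := hRN x y hx hf h
    refine ⟨⟨by linarith, by linarith⟩, (aux_irr N hN (a 0) x y hx h).2 hirr, ?_⟩
    intro k hk
    cases k with
    | zero => exact hf
    | succ k =>
      rw [digit, Function.iterate_succ_apply, hR]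
      exact hd k (by omega)

/-- The weight. -/
noncomputable def auxP (N : ℕ) (i : ℤ) (t : ℝ) : ℝ :=
  (t + (N : ℝ) - 1) / ((t + (i : ℝ)) * (t + (i : ℝ) - 1))

lemma aux_rhoT (N : ℕ) (t : ℝ) (B : Set ℝ) (hB : MeasurableSet B) (h : B ⊆ Set.Icc 0 1) :
    rhoT N t B = ∫⁻ x in B,
      ENNReal.ofReal ((N : ℝ) * ((N : ℝ) - 1 + t) / ((N : ℝ) - (1 - x) * (1 - t)) ^ 2) := by
  rw [rhoT, withDensity_apply _ hB, Measure.restrict_restrict hB, Set.inter_eq_left.2 h]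

lemma aux_cyl_sub (N n : ℕ) (a : ℕ → ℤ) : cyl N n a ⊆ Set.Icc 0 1 := fun _ h => h.1

lemma aux_step (N : ℕ) (hN : 2 ≤ N) (t : ℝ) (ht : t ∈ Set.Icc (0 : ℝ) 1)
    (n : ℕ) (a : ℕ → ℤ) (ha : (N : ℤ) ≤ a 0) :
    rhoT N t (cyl N (n + 1) a) = ENNReal.ofReal (auxP N (a 0) t) *
      rhoT N (1 - (N : ℝ) / ((a 0 : ℝ) + t)) (cyl N n (fun k => a (k + 1))) := by
  have h2 : (2 : ℝ) ≤ N := by exact_mod_cast hN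
  have haR : (N : ℝ) ≤ a 0 := by exact_mod_cast ha
  have ht0 := ht.1
  have ht1 := ht.2
  have hBm := aux_meas_cyl N n (fun k => a (k + 1))
  have hBs := aux_cyl_sub N n (fun k => a (k + 1))
  rw [aux_rhoT N t _ (aux_meas_cyl _ _ _) (aux_cyl_sub _ _ _), aux_rhoT N _ _ hBm hBs,
    aux_image N hN n a ha]
  rw [lintegral_image_eq_lintegral_abs_deriv_mul (f' := fun y => (N : ℝ) / (a 0 + y) ^ 2) hBm]
  · rw [← lintegral_const_mul' _ _ ENNReal.ofReal_ne_top]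
    refine setLIntegral_congr_fun hBm ?_
    intro y hy
    obtain ⟨hy0, hy1⟩ := hBs hy
    have hp : 0 ≤ auxP N (a 0) t := by
      unfold auxP
      apply div_nonneg (by linarith)
      exact mul_nonneg (by linarith) (by linarith)
    show ENNReal.ofReal _ * ENNReal.ofReal _ = ENNReal.ofReal _ * ENNReal.ofReal _
    rw [← ENNReal.ofReal_mul (abs_nonneg _), ← ENNReal.ofReal_mul hp, abs_of_nonneg (by positivity)]
    congr 1
    unfold auxP
    generalize (a 0 : ℝ) = b at *
    have e1 : (N : ℝ) - (1 - (1 - N / (b + y))) * (1 - t) = N * (b + y - 1 + t) / (b + y) := by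
      have : b + y ≠ 0 := by linarith
      field_simp; ring
    have e2 : (N : ℝ) - (1 - y) * (1 - (1 - N / (b + t))) = N * (b + y - 1 + t) / (b + t) := by
      have : b + t ≠ 0 := by linarith
      field_simp; ring
    have e3 : (N : ℝ) - 1 + (1 - N / (b + t)) = N * (b + t - 1) / (b + t) := by
      have : b + t ≠ 0 := by linarith
      field_simp; ring
    rw [e1, e2, e3]
    have n1 : b + y ≠ 0 := by linarith
    have n2 : b + t ≠ 0 := by linarith
    have n3 : t + b ≠ 0 := by linarith
    have n4 : b + t - 1 ≠ 0 := by linarith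
    have n5 : t + b - 1 ≠ 0 := by linarith
    have n6 : b + y - 1 + t ≠ 0 := by linarith
    have n7 : (N : ℝ) ≠ 0 := by linarith
    field_simp
    ring
  · intro y hy
    obtain ⟨hy0, hy1⟩ := hBs hy
    have n1 : (a 0 : ℝ) + y ≠ 0 := by linarith
    have := (((hasDerivAt_id y).const_add (a 0 : ℝ)).fun_inv n1).const_mul (N : ℝ)
    have := this.const_sub 1
    refine (HasDerivAt.congr_deriv (this.congr_of_eventuallyEq ?_) ?_).hasDerivWithinAt
    · exact Eventually.of_forall fun z => by simp [div_eq_mul_inv]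
    · simp only [id]; ring
  · intro y hy z hz hyz
    obtain ⟨hy0, hy1⟩ := hBs hy
    obtain ⟨hz0, hz1⟩ := hBs hz
    have n1 : (a 0 : ℝ) + y ≠ 0 := by linarith
    have n2 : (a 0 : ℝ) + z ≠ 0 := by linarith
    have n7 : (N : ℝ) ≠ 0 := by linarith
    simp only [sub_right_inj] at hyz
    rw [div_eq_div_iff n1 n2] at hyz
    have := mul_left_cancel₀ n7 hyz
    linarith

lemma aux_mass (N : ℕ) (hN : 2 ≤ N) (t : ℝ) (ht : t ∈ Set.Icc (0 : ℝ) 1) (a : ℕ → ℤ) :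
    rhoT N t (cyl N 0 a) = 1 := by
  have h2 : (2 : ℝ) ≤ N := by exact_mod_cast hN
  have hae : cyl N 0 a =ᵐ[volume] Set.Icc (0 : ℝ) 1 := by
    have hc : (Set.range ((↑) : ℚ → ℝ)).Countable := Set.countable_range _
    have := hc.ae_notMem volume
    filter_upwards [this] with x hx
    have : Irrational x := hx
    apply propext
    exact ⟨fun h => h.1, fun h => ⟨h, this, by simp⟩⟩
  rw [aux_rhoT N t _ (aux_meas_cyl _ _ _) (aux_cyl_sub _ _ _), setLIntegral_congr hae]
  have hcont : ContinuousOn (fun x : ℝ =>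
      (N : ℝ) * ((N : ℝ) - 1 + t) / ((N : ℝ) - (1 - x) * (1 - t)) ^ 2) (Set.Icc 0 1) := by
    refine ContinuousOn.div (by fun_prop) (by fun_prop) ?_
    intro x hx
    exact pow_ne_zero _ (aux_den N hN t x ht hx).ne'
  rw [← ofReal_integral_eq_lintegral_ofReal hcont.integrableOn_Icc]
  · rw [integral_Icc_eq_integral_Ioc, ← intervalIntegral.integral_of_le zero_le_one]
    rw [intervalIntegral.integral_eq_sub_of_hasDerivAt
      (f := fun x => (N : ℝ) * x / ((N : ℝ) - (1 - x) * (1 - t)))]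
    · have : (N : ℝ) ≠ 0 := by linarith
      simp [this]
    · intro x hx
      rw [Set.uIcc_of_le zero_le_one] at hx
      have hD := (aux_den N hN t x ht hx).ne'
      have h1 := (hasDerivAt_id x).const_mul (N : ℝ)
      have h3 := ((((hasDerivAt_id x).const_sub 1).mul_const (1 - t)).const_sub (N : ℝ))
      refine (h1.fun_div h3 hD).congr_deriv ?_
      simp only [id]
      ring
    · apply ContinuousOn.intervalIntegrable
      rwa [Set.uIcc_of_le zero_le_one]
  · refine ae_of_all _ fun x => ?_
    exact div_nonneg (mul_nonneg (by linarith) (by linarith [ht.1])) (sq_nonneg _)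

lemma aux_sRec (N : ℕ) (t : ℝ) (a : ℕ → ℤ) (n : ℕ) :
    sRec N t a (n + 1) = sRec N (1 - (N : ℝ) / ((a 0 : ℝ) + t)) (fun k => a (k + 1)) n := by
  induction n with
  | zero => simp [sRec]
  | succ n ih => rw [sRec, ih]; simp [sRec]

lemma aux_main (N : ℕ) (hN : 2 ≤ N) (n : ℕ) : ∀ (t : ℝ) (_ : t ∈ Set.Icc (0 : ℝ) 1)
    (a b : ℕ → ℤ) (_ : ∀ k < n + 1, (N : ℤ) ≤ b k) (_ : ∀ k < n, b k = a k),
    rhoT N t (cyl N (n + 1) b) =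
      ENNReal.ofReal (auxP N (b n) (sRec N t a n)) * rhoT N t (cyl N n a) := by
  have h2 : (2 : ℝ) ≤ N := by exact_mod_cast hN
  have hs : ∀ (t : ℝ) (_ : t ∈ Set.Icc (0 : ℝ) 1) (c : ℤ) (_ : (N : ℤ) ≤ c),
      1 - (N : ℝ) / ((c : ℝ) + t) ∈ Set.Icc (0 : ℝ) 1 := by
    intro t ht c hc
    have hcR : (N : ℝ) ≤ c := by exact_mod_cast hc
    have hp : 0 < (c : ℝ) + t := by linarith [ht.1]
    have h3 : (N : ℝ) / (c + t) ≤ 1 := by rw [div_le_one hp]; linarith [ht.1]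
    have h4 : 0 ≤ (N : ℝ) / (c + t) := by positivity
    exact ⟨by linarith, by linarith⟩
  induction n with
  | zero =>
    intro t ht a b hb _
    have h0 := hb 0 (by omega)
    rw [aux_step N hN t ht 0 b h0, aux_mass N hN _ (hs t ht _ h0), aux_mass N hN t ht]
    rfl
  | succ n ih =>
    intro t ht a b hb hab
    have h0 := hb 0 (by omega)
    have e0 := hab 0 (by omega)
    rw [aux_step N hN t ht (n + 1) b h0,
      aux_step N hN t ht n a (e0 ▸ h0), aux_sRec,
      ih _ (hs t ht _ h0) (fun k => a (k + 1)) (fun k => b (k + 1))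
        (fun k hk => hb _ (by omega)) (fun k hk => hab _ (by omega)), e0]
    ring

lemma aux_sRec_nonneg (N : ℕ) (hN : 2 ≤ N) (t : ℝ) (ht : 0 ≤ t) (a : ℕ → ℤ) (n : ℕ)
    (ha : ∀ k < n, (N : ℤ) ≤ a k) : 0 ≤ sRec N t a n := by
  induction n with
  | zero => exact ht
  | succ n ih =>
    have h := ih fun k hk => ha k (by omega)
    have hcR : (N : ℝ) ≤ a n := by exact_mod_cast ha n (by omega)
    have h2 : (2 : ℝ) ≤ N := by exact_mod_cast hN
    have hp : 0 < (a n : ℝ) + sRec N t a n := by linarith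
    have h3 : (N : ℝ) / (a n + sRec N t a n) ≤ 1 := by rw [div_le_one hp]; linarith
    rw [sRec]; linarith

theorem stmt2 (N : ℕ) (hN : 2 ≤ N) (t : ℝ) (ht : t ∈ Set.Icc (0 : ℝ) 1)
    (n : ℕ) (hn : 1 ≤ n) (a : ℕ → ℤ) (ha : ∀ k < n, (N : ℤ) ≤ a k)
    (i : ℤ) (hi : (N : ℤ) ≤ i) :
    (rhoT N t (cyl N (n + 1) (Function.update a n i))).toReal
      = (sRec N t a n + (N : ℝ) - 1)
          / ((sRec N t a n + (i : ℝ)) * (sRec N t a n + (i : ℝ) - 1))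
        * (rhoT N t (cyl N n a)).toReal := by
  have h := aux_main N hN n t ht a (Function.update a n i) ?_ ?_
  · rw [h, ENNReal.toReal_mul, ENNReal.toReal_ofReal]
    · simp only [Function.update_self, auxP]
    · have h2 : (2 : ℝ) ≤ N := by exact_mod_cast hN
      have hiR : (N : ℝ) ≤ i := by exact_mod_cast hi
      have h0 := aux_sRec_nonneg N hN t ht.1 a n ha
      simp only [Function.update_self, auxP]
      exact div_nonneg (by linarith) (mul_nonneg (by linarith) (by linarith))
  · intro k hk
    rcases eq_or_ne k n with rfl | hne
    · simpa using hi
    · rw [Function.update_of_ne hne]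
      exact ha k (by omega)
  · intro k hk
    exact Function.update_of_ne (by omega) _ _
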